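/- Let n ≥ 1 and m ≥ 1 be integers, let R₁, …, R_m be nonnegative integers with R₁ + ⋯ + R_m ≤ n − m, set γ_v = n − v + 1 − Σ_{u=1}^{v−1} R_u for 1 ≤ v ≤ m + 1, and let θ > 0, T > 0 and an integer i with 1 ≤ i ≤ m. Let μ be the measure on ℝ^m whose density with respect to Lebesgue measure is z ↦ 1_{0 < z₁ < ⋯ < z_m < T} · exp(−(1/θ) Σ_{s=1}^{m} z_s(1 + R_s)), and let g(z) = (Σ_{s=1}^{m} z_s(1 + R_s))/i. Then the pushforward measure g_*μ has Lebesgue density x ↦ θ^m Σ_{v=0}^{m} [ (−1)^v e^{−(T/θ)(γ_{m−v+1} − γ_{m+1})} / ( (∏_{j=1}^{v} (γ_{m−v+1} − γ_{m−v+j+1})) (∏_{j=1}^{m−v} (γ_j − γ_{m−v+1})) ) ] · f_G(x; T(γ_{m−v+1} − γ_{m+1})/i, m, i/θ). (This is the conditional density of the MLE θ̂₁ = W/D₁ given Z_{k:m:n} < Z_{m:m:n} < T and D₁ = i, up to the common normalizing constant.) -/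

import Mathlib

open MeasureTheory

/-- `γ_v = n − v + 1 − Σ_{u=1}^{v−1} R_u`, the number of surviving units at the time of the
`v`-th failure in a progressive censoring scheme with removals `R 1, R 2, …`. -/
noncomputable def gam (n : ℕ) (R : ℕ → ℕ) (v : ℕ) : ℝ :=
  (n : ℝ) - v + 1 - ∑ u ∈ Finset.Icc 1 (v - 1), (R u : ℝ)

/-- `fG x a b c`: density at `x` of the shifted Gamma distribution with shift `a`,
shape `b` and rate `c`, i.e. `(c^b/Γ(b)) (x − a)^{b−1} e^{−c(x−a)}` for `x > a`. -/
noncomputable def fG (x a b c : ℝ) : ℝ :=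
  if a < x then c ^ b / Real.Gamma b * (x - a) ^ (b - 1) * Real.exp (-c * (x - a)) else 0

/-!
The vector `z` is uniform (up to normalisation) on the ordered simplex `0 < z₁ < ⋯ < z_m < T`, and
the weights are the gaps of the knots `-γ₁ < ⋯ < -γ_{m+1}`.  By the Hermite–Genocchi principle a
linear form on a simplex has a B-spline as its density: here a divided difference, over these
knots, of the truncated power `x ↦ x₊^{m-1}`.  This follows by induction on `m`: conditioning on
the largest coordinate `z_m = t` adds a knot to the divided difference, the weight at the new knot
being the barycentric expansion of the constant polynomial `1`.  The exponential factor depends on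
`z` only through the linear form, so it multiplies the density; it combines with the truncated
powers into shifted Gamma densities.
-/

section NodalWeight

variable {ι F : Type*} [DecidableEq ι] [Field F] {s : Finset ι} {v : ι → F} {i j : ι}

lemma nodalWeight_insert_of_ne (hi : i ∉ s) (hij : i ≠ j) :
    Lagrange.nodalWeight (insert i s) v j = Lagrange.nodalWeight s v j * (v j - v i)⁻¹ := by
  rw [Lagrange.nodalWeight, Finset.erase_insert_of_ne hij,
    Finset.prod_insert (fun h => hi (Finset.mem_of_mem_erase h)), mul_comm, Lagrange.nodalWeight]

lemma nodalWeight_insert_self (hs : s.Nonempty) (hi : i ∉ s) (hv : Set.InjOn v (insert i s)) :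
    Lagrange.nodalWeight (insert i s) v i =
      ∑ j ∈ s, Lagrange.nodalWeight s v j * (v i - v j)⁻¹ := by
  have hne : ∀ j ∈ s, v i ≠ v j := fun j hj h =>
    hi (hv (Set.mem_insert i _) (Set.mem_insert_of_mem i hj) h ▸ hj)
  have barycentric := Lagrange.eval_interpolate_not_at_node (s := s) (v := v) 1 hne
  rw [Lagrange.interpolate_one (hv.mono (Set.subset_insert i _)) hs, Lagrange.eval_nodal]
    at barycentric
  simp only [Polynomial.eval_one, Pi.one_apply, mul_one] at barycentric
  rw [eq_inv_of_mul_eq_one_right barycentric.symm, Lagrange.nodalWeight, Finset.erase_insert hi,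
    Finset.prod_inv_distrib]

end NodalWeight

lemma prod_range_erase {M : Type*} [CommMonoid M] (f : ℕ → M) (q v : ℕ) :
    ∏ j ∈ (Finset.range (q + v + 1)).erase q, f j =
      (∏ j ∈ Finset.range q, f j) * ∏ j ∈ Finset.range v, f (q + j + 1) := by
  induction v with
  | zero => simp [Finset.range_add_one]
  | succ v ih =>
    rw [← add_assoc, Finset.range_add_one (n := q + v + 1), Finset.erase_insert_of_ne (by omega),
      Finset.prod_insert (by simp), ih, Finset.prod_range_succ, mul_comm, mul_assoc]

lemma prod_Icc_one_eq_prod_range {M : Type*} [CommMonoid M] (f : ℕ → M) (v : ℕ) :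
    ∏ j ∈ Finset.Icc 1 v, f j = ∏ j ∈ Finset.range v, f (j + 1) := by
  rw [Finset.range_eq_Ico, Finset.prod_Ico_add' f 0 v 1, zero_add, Finset.Ico_add_one_right_eq_Icc]

lemma nodalWeight_neg_shift {F : Type*} [Field F] (γ : ℕ → F) (q v : ℕ) :
    Lagrange.nodalWeight (Finset.range (q + v + 1)) (fun j => -γ (j + 1)) q =
      (-1) ^ v / ((∏ j ∈ Finset.Icc 1 v, (γ (q + 1) - γ (q + j + 1))) *
        ∏ j ∈ Finset.Icc 1 q, (γ j - γ (q + 1))) := by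
  have flip_sign : ∀ j, (-γ (q + 1) - -γ (q + j + 1 + 1))⁻¹ =
      -1 * (γ (q + 1) - γ (q + (j + 1) + 1))⁻¹ := fun j => by
    rw [neg_one_mul, ← inv_neg, ← add_assoc]; ring
  have swap : ∀ j, -γ (q + 1) - -γ (j + 1) = γ (j + 1) - γ (q + 1) := fun j => by ring
  rw [Lagrange.nodalWeight, prod_range_erase, prod_Icc_one_eq_prod_range,
    prod_Icc_one_eq_prod_range]
  simp only [flip_sign]
  simp only [swap, Finset.prod_mul_distrib, Finset.prod_const, Finset.card_range,
    Finset.prod_inv_distrib]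
  rw [div_eq_mul_inv, mul_inv]
  ring

/-- The truncated power `x₊ᵏ`, normalised to vanish at `x = 0` also for `k = 0`. -/
noncomputable def truncPow (k : ℕ) (x : ℝ) : ℝ := if 0 < x then x ^ k else 0

section TruncPow

variable (k : ℕ)

lemma truncPow_of_pos {x : ℝ} (hx : 0 < x) : truncPow k x = x ^ k := if_pos hx

lemma truncPow_of_nonpos {x : ℝ} (hx : x ≤ 0) : truncPow k x = 0 := if_neg hx.not_gt

lemma measurable_truncPow : Measurable (truncPow k) :=
  Measurable.ite measurableSet_Ioi (by fun_prop) measurable_const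

lemma monotone_truncPow : Monotone (truncPow k) := by
  intro x y hxy
  rcases le_or_gt x 0 with hx | hx
  · rw [truncPow_of_nonpos k hx, truncPow]
    split_ifs <;> positivity
  · rw [truncPow_of_pos k hx, truncPow_of_pos k (hx.trans_le hxy)]
    exact pow_le_pow_left₀ hx.le hxy k

lemma continuous_truncPow_succ : Continuous (truncPow (k + 1)) := by
  have eq_max : truncPow (k + 1) = fun x => max x 0 ^ (k + 1) := by
    funext x
    rcases le_or_gt x 0 with hx | hx
    · rw [truncPow_of_nonpos _ hx, max_eq_right hx, zero_pow k.succ_ne_zero]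
    · rw [truncPow_of_pos _ hx, max_eq_left hx.le]
  rw [eq_max]
  fun_prop

lemma hasDerivAt_truncPow_succ {x : ℝ} (hx : x ≠ 0) :
    HasDerivAt (truncPow (k + 1)) ((k + 1) * truncPow k x) x := by
  rcases hx.lt_or_gt with hx | hx
  · rw [truncPow_of_nonpos k hx.le, mul_zero]
    refine (hasDerivAt_const x 0).congr_of_eventuallyEq ?_
    filter_upwards [Iio_mem_nhds hx] with y hy using truncPow_of_nonpos _ hy.le
  · rw [truncPow_of_pos k hx]
    have hpow : HasDerivAt (fun y : ℝ => y ^ (k + 1)) ((k + 1) * x ^ k) x := by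
      simpa using hasDerivAt_pow (k + 1) x
    refine hpow.congr_of_eventuallyEq ?_
    filter_upwards [Ioi_mem_nhds hx] with y hy using truncPow_of_pos _ hy

lemma integral_truncPow (a b : ℝ) :
    ∫ x in a..b, truncPow k x = (truncPow (k + 1) b - truncPow (k + 1) a) / (k + 1) := by
  have hk : (k : ℝ) + 1 ≠ 0 := by positivity
  rw [eq_div_iff hk, mul_comm, ← intervalIntegral.integral_const_mul]
  exact integral_eq_of_hasDerivAt_off_countable _ _ (Set.countable_singleton 0)
    (continuous_truncPow_succ k).continuousOn
    (fun x hx => hasDerivAt_truncPow_succ k hx.2)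
    ((monotone_truncPow k).intervalIntegrable.const_mul _)

lemma integral_truncPow_sub_mul (w T : ℝ) {B : ℝ} (hB : B ≠ 0) :
    ∫ t in 0..T, truncPow k (w - B * t) =
      (truncPow (k + 1) w - truncPow (k + 1) (w - B * T)) / ((k + 1) * B) := by
  rw [intervalIntegral.integral_comp_sub_mul _ hB, integral_truncPow, mul_zero, sub_zero,
    smul_eq_mul]
  field_simp

lemma intervalIntegrable_truncPow_sub_mul (w a b : ℝ) {B : ℝ} (hB : 0 ≤ B) :
    IntervalIntegrable (fun t => truncPow k (w - B * t)) volume a b := by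
  refine Antitone.intervalIntegrable fun s t hst => monotone_truncPow k ?_
  gcongr

end TruncPow

/-- The B-spline `w ↦ (1/k!) ∑ⱼ ωⱼ (w - (τ_{k+1} - τⱼ) T)₊ᵏ`, a divided difference of truncated
powers over the knots `τ₀, …, τ_{k+1}` with barycentric weights `ωⱼ`.  It is the density of
`∑ₛ (τ_{s+1} - τₛ) zₛ` for Lebesgue measure on the ordered simplex `0 < z₀ < ⋯ < z_k < T`. -/
noncomputable def simplexSpline (τ : ℕ → ℝ) (k : ℕ) (T w : ℝ) : ℝ :=
  (∑ j ∈ Finset.range (k + 2), Lagrange.nodalWeight (Finset.range (k + 2)) τ j *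
    truncPow k (w - (τ (k + 1) - τ j) * T)) / k.factorial

section SimplexSpline

variable {τ : ℕ → ℝ} {k : ℕ}

@[fun_prop]
lemma measurable_simplexSpline {α : Type*} [MeasurableSpace α] (τ : ℕ → ℝ) (k : ℕ) {f g : α → ℝ}
    (hf : Measurable f) (hg : Measurable g) : Measurable fun x => simplexSpline τ k (f x) (g x) :=
  (Finset.measurable_fun_sum _ fun j _ =>
    ((measurable_truncPow k).comp (hg.sub (hf.const_mul (τ (k + 1) - τ j)))).const_mul
      (Lagrange.nodalWeight (Finset.range (k + 2)) τ j)).div_const _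

lemma simplexSpline_sub_mul (τ : ℕ → ℝ) (k : ℕ) (t w : ℝ) :
    simplexSpline τ k t (w - (τ (k + 2) - τ (k + 1)) * t) =
      (∑ j ∈ Finset.range (k + 2), Lagrange.nodalWeight (Finset.range (k + 2)) τ j *
        truncPow k (w - (τ (k + 2) - τ j) * t)) / k.factorial := by
  have shift : ∀ j, w - (τ (k + 2) - τ (k + 1)) * t - (τ (k + 1) - τ j) * t =
      w - (τ (k + 2) - τ j) * t := fun j => by ring
  simp only [simplexSpline, shift]

lemma simplexSpline_zero (hτ : τ 0 < τ 1) {T : ℝ} (hT : 0 ≤ T) (w : ℝ) :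
    simplexSpline τ 0 T w =
      (τ 1 - τ 0)⁻¹ * (Set.Ioc 0 ((τ 1 - τ 0) * T)).indicator 1 w := by
  have hgap : 0 ≤ (τ 1 - τ 0) * T := mul_nonneg (sub_pos.2 hτ).le hT
  have h₀ : Lagrange.nodalWeight (Finset.range 2) τ 0 = -(τ 1 - τ 0)⁻¹ := by
    simp [Lagrange.nodalWeight, Finset.range_add_one, Finset.erase_insert_of_ne, ← inv_neg]
  have h₁ : Lagrange.nodalWeight (Finset.range 2) τ 1 = (τ 1 - τ 0)⁻¹ := by
    simp [Lagrange.nodalWeight, Finset.range_add_one]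
  simp only [simplexSpline, Finset.sum_range_succ, Finset.sum_range_zero, zero_add, h₀, h₁,
    truncPow, pow_zero, sub_self, zero_mul, sub_pos, Nat.factorial_zero, Nat.cast_one,
    div_one, Set.indicator_apply, Set.mem_Ioc, Pi.one_apply]
  rcases le_or_gt w 0 with hw | hw
  · simp [hw.not_gt, (hw.trans hgap).not_gt]
  · rcases le_or_gt w ((τ 1 - τ 0) * T) with hw' | hw'
    · simp [hw, hw', hw'.not_gt]
    · simp [hw, hw', hw'.not_ge]

lemma last_sub_pos_of_strictMonoOn (hτ : StrictMonoOn τ (Set.Iic (k + 1))) {j : ℕ}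
    (hj : j ∈ Finset.range (k + 1)) :
    0 < τ (k + 1) - τ j := by
  rw [Finset.mem_range] at hj
  exact sub_pos.2 (hτ (Set.mem_Iic.2 hj.le) Set.self_mem_Iic hj)

lemma intervalIntegrable_simplexSpline (hτ : StrictMonoOn τ (Set.Iic (k + 2))) (w a b : ℝ) :
    IntervalIntegrable (fun t => simplexSpline τ k t (w - (τ (k + 2) - τ (k + 1)) * t))
      volume a b := by
  simp only [simplexSpline_sub_mul]
  refine IntervalIntegrable.div_const ?_ _
  simpa only [Finset.sum_fn] using IntervalIntegrable.sum _ fun j hj =>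
    (intervalIntegrable_truncPow_sub_mul k w a b (last_sub_pos_of_strictMonoOn hτ hj).le).const_mul
      (Lagrange.nodalWeight (Finset.range (k + 2)) τ j)

lemma nodalWeight_mul_integral_truncPow (hτ : StrictMonoOn τ (Set.Iic (k + 2))) (w T : ℝ) {j : ℕ}
    (hj : j ∈ Finset.range (k + 2)) :
    Lagrange.nodalWeight (Finset.range (k + 2)) τ j *
        ∫ t in 0..T, truncPow k (w - (τ (k + 2) - τ j) * t) =
      (Lagrange.nodalWeight (Finset.range (k + 3)) τ j *
          truncPow (k + 1) (w - (τ (k + 2) - τ j) * T) +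
        Lagrange.nodalWeight (Finset.range (k + 2)) τ j * (τ (k + 2) - τ j)⁻¹ *
          truncPow (k + 1) w) / (k + 1) := by
  have hgap := (last_sub_pos_of_strictMonoOn hτ hj).ne'
  have hk : (k : ℝ) + 1 ≠ 0 := by positivity
  rw [integral_truncPow_sub_mul k w T hgap, Finset.range_add_one (n := k + 2),
    nodalWeight_insert_of_ne Finset.notMem_range_self (Finset.mem_range.1 hj).ne',
    ← neg_sub (τ (k + 2)), inv_neg]
  field_simp
  ring

lemma integral_simplexSpline (hτ : StrictMonoOn τ (Set.Iic (k + 2))) (T w : ℝ) :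
    ∫ t in 0..T, simplexSpline τ k t (w - (τ (k + 2) - τ (k + 1)) * t) =
      simplexSpline τ (k + 1) T w := by
  have hinj : Set.InjOn τ (insert (k + 2) (Finset.range (k + 2) : Set ℕ)) :=
    hτ.injOn.mono fun j hj => by
      rcases hj with rfl | hj
      · exact Set.self_mem_Iic
      · exact Set.mem_Iic.2 (Finset.mem_range.1 hj).le
  simp only [simplexSpline_sub_mul]
  rw [intervalIntegral.integral_div, intervalIntegral.integral_finsetSum fun j hj =>
    (intervalIntegrable_truncPow_sub_mul k w 0 T
      (last_sub_pos_of_strictMonoOn hτ hj).le).const_mul _]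
  simp only [intervalIntegral.integral_const_mul]
  rw [Finset.sum_congr rfl fun j hj => nodalWeight_mul_integral_truncPow hτ w T hj,
    ← Finset.sum_div, Finset.sum_add_distrib, ← Finset.sum_mul,
    ← nodalWeight_insert_self (by simp) Finset.notMem_range_self hinj, ← Finset.range_add_one,
    simplexSpline, Finset.sum_range_succ _ (k + 2), Nat.factorial_succ, div_div]
  simp only [sub_self, zero_mul, sub_zero, Nat.cast_mul, Nat.cast_add, Nat.cast_one]

lemma simplexSpline_nonneg (hτ : StrictMonoOn τ (Set.Iic (k + 1))) {T : ℝ} (hT : 0 ≤ T) (w : ℝ) :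
    0 ≤ simplexSpline τ k T w := by
  induction k generalizing T w with
  | zero =>
    have hgap := last_sub_pos_of_strictMonoOn hτ (Finset.self_mem_range_succ 0)
    rw [simplexSpline_zero (sub_pos.1 hgap) hT]
    exact mul_nonneg (inv_nonneg.2 hgap.le) (Set.indicator_nonneg (fun _ _ => zero_le_one) w)
  | succ k ih =>
    rw [← integral_simplexSpline hτ]
    exact intervalIntegral.integral_nonneg hT fun t ht =>
      ih (hτ.mono (Set.Iic_subset_Iic.2 (k + 1).le_succ)) ht.1 _

lemma setLIntegral_simplexSpline (hτ : StrictMonoOn τ (Set.Iic (k + 2))) {T : ℝ} (hT : 0 ≤ T)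
    (w : ℝ) :
    ∫⁻ t in Set.Ioo 0 T,
        ENNReal.ofReal (simplexSpline τ k t (w - (τ (k + 2) - τ (k + 1)) * t)) =
      ENNReal.ofReal (simplexSpline τ (k + 1) T w) := by
  rw [← integral_simplexSpline hτ, intervalIntegral.integral_of_le hT,
    integral_Ioc_eq_integral_Ioo, ofReal_integral_eq_lintegral_ofReal]
  · exact (intervalIntegrable_iff_integrableOn_Ioo_of_le hT).1
      (intervalIntegrable_simplexSpline hτ w 0 T)
  · filter_upwards [ae_restrict_mem measurableSet_Ioo] with t ht
    exact simplexSpline_nonneg (hτ.mono (Set.Iic_subset_Iic.2 (k + 1).le_succ)) ht.1.le _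

end SimplexSpline

/-- The ordered simplex `0 < z₁ < ⋯ < z_m < T` in `ℝᵐ`. -/
def orderedSimplex (m : ℕ) (T : ℝ) : Set (Fin m → ℝ) :=
  {z | StrictMono z ∧ ∀ h, 0 < z h ∧ z h < T}

lemma measurableSet_orderedSimplex (m : ℕ) (T : ℝ) : MeasurableSet (orderedSimplex m T) := by
  unfold orderedSimplex StrictMono
  measurability

lemma snoc_mem_orderedSimplex {m : ℕ} {T t : ℝ} {z : Fin m → ℝ} :
    (Fin.snoc z t : Fin (m + 1) → ℝ) ∈ orderedSimplex (m + 1) T ↔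
      t ∈ Set.Ioo 0 T ∧ z ∈ orderedSimplex m t := by
  simp only [orderedSimplex, Set.mem_ofPred_eq, ← Fin.insertNth_last',
    Fin.strictMono_insertNth_iff, Fin.forall_fin_succ']
  simp only [Fin.insertNth_last', Fin.snoc_castSucc, Fin.snoc_last, Set.mem_Ioo,
    Fin.castSucc_lt_last, Fin.last_le_iff, Fin.castSucc_ne_last, forall_true_left,
    IsEmpty.forall_iff, implies_true, and_true]
  constructor
  · rintro ⟨⟨hmono, hlt⟩, hz, ht⟩
    exact ⟨ht, hmono, fun h => ⟨(hz h).1, hlt h⟩⟩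
  · rintro ⟨ht, hmono, hz⟩
    exact ⟨⟨hmono, fun h => (hz h).2⟩, fun h => ⟨(hz h).1, (hz h).2.trans ht.2⟩, ht⟩

lemma setLIntegral_orderedSimplex_succ (m : ℕ) (T : ℝ) {f : (Fin (m + 1) → ℝ) → ENNReal}
    (hf : Measurable f) :
    ∫⁻ z in orderedSimplex (m + 1) T, f z =
      ∫⁻ t in Set.Ioo 0 T, ∫⁻ z in orderedSimplex m t, f (Fin.snoc z t) := by
  classical
  set e := (MeasurableEquiv.piFinSuccAbove (fun _ : Fin (m + 1) => ℝ) (Fin.last m)).symm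
  have he : ∀ t z, e (t, z) = Fin.snoc z t := fun t z => Fin.insertNth_last' t z
  have hpres : MeasurePreserving e :=
    (volume_preserving_piFinSuccAbove (fun _ => ℝ) (Fin.last m)).symm _
  have hind := hf.indicator (measurableSet_orderedSimplex (m + 1) T)
  rw [← lintegral_indicator (measurableSet_orderedSimplex _ _),
    ← hpres.lintegral_comp_emb e.measurableEmbedding, Measure.volume_eq_prod,
    lintegral_prod (fun p => (orderedSimplex (m + 1) T).indicator f (e p))
      (hind.comp e.measurable).aemeasurable, ← lintegral_indicator measurableSet_Ioo]
  refine lintegral_congr fun t => ?_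
  by_cases ht : t ∈ Set.Ioo 0 T
  · rw [Set.indicator_of_mem ht, ← lintegral_indicator (measurableSet_orderedSimplex _ _)]
    simp only [he, Set.indicator_apply, snoc_mem_orderedSimplex, ht, true_and]
  · simp only [he, Set.indicator_apply, snoc_mem_orderedSimplex, ht, false_and, if_false,
      lintegral_zero]

lemma lintegral_eq_ofReal_mul_lintegral_comp_mul_left {c : ℝ} (hc : 0 < c) {f : ℝ → ENNReal}
    (hf : Measurable f) : ∫⁻ x, f x = ENNReal.ofReal c * ∫⁻ x, f (c * x) := by
  conv_lhs => rw [← Real.smul_map_volume_mul_left hc.ne']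
  rw [lintegral_smul_measure, lintegral_map hf (measurable_const_mul c), abs_of_pos hc,
    smul_eq_mul]

lemma setLIntegral_orderedSimplex_zero (T : ℝ) (f : (Fin 0 → ℝ) → ENNReal) :
    ∫⁻ z in orderedSimplex 0 T, f z = f default := by
  have huniv : orderedSimplex 0 T = Set.univ :=
    Set.eq_univ_of_forall fun z => ⟨Subsingleton.strictMono z, fun h => h.elim0⟩
  rw [huniv, Measure.restrict_univ, lintegral_unique, volume_pi, Measure.pi_of_empty,
    measure_univ, mul_one]
  exact congrArg f (Subsingleton.elim _ _)

section WeightedSum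

variable {τ : ℕ → ℝ} {k : ℕ} {T : ℝ} {φ : ℝ → ENNReal}

lemma setLIntegral_comp_mul_eq_lintegral_simplexSpline_zero (hτ : τ 0 < τ 1) (hT : 0 ≤ T)
    (hφ : Measurable φ) :
    ∫⁻ t in Set.Ioo 0 T, φ ((τ 1 - τ 0) * t) =
      ∫⁻ w, ENNReal.ofReal (simplexSpline τ 0 T w) * φ w := by
  have hgap : 0 < τ 1 - τ 0 := sub_pos.2 hτ
  rw [lintegral_eq_ofReal_mul_lintegral_comp_mul_left
      (f := fun w => ENNReal.ofReal (simplexSpline τ 0 T w) * φ w) hgap (by fun_prop),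
    ← lintegral_const_mul' _ _ ENNReal.ofReal_ne_top, restrict_Ioo_eq_restrict_Ioc,
    ← lintegral_indicator measurableSet_Ioc]
  refine lintegral_congr fun t => ?_
  rw [← mul_assoc, ← ENNReal.ofReal_mul hgap.le, simplexSpline_zero hτ hT, ← mul_assoc,
    mul_inv_cancel₀ hgap.ne', one_mul]
  simp only [Set.indicator_apply, Set.mem_Ioc, mul_pos_iff_of_pos_left hgap,
    mul_le_mul_iff_right₀ hgap, Pi.one_apply]
  split_ifs <;> simp

lemma setLIntegral_orderedSimplex_succ_weightedSum (τ : ℕ → ℝ) (m : ℕ) (T : ℝ)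
    (hφ : Measurable φ) :
    ∫⁻ z in orderedSimplex (m + 1) T, φ (∑ s : Fin (m + 1), z s * (τ (s + 1) - τ s)) =
      ∫⁻ t in Set.Ioo 0 T, ∫⁻ z in orderedSimplex m t,
        φ (∑ s : Fin m, z s * (τ (s + 1) - τ s) + (τ (m + 1) - τ m) * t) := by
  rw [setLIntegral_orderedSimplex_succ m T (f := fun z => φ (∑ s, z s * _))
    (hφ.comp (by fun_prop))]
  simp only [Fin.sum_univ_castSucc, Fin.snoc_castSucc, Fin.snoc_last, Fin.val_castSucc,
    Fin.val_last, mul_comm (τ (m + 1) - τ m)]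

lemma setLIntegral_orderedSimplex_weightedSum (hτ : StrictMonoOn τ (Set.Iic (k + 1)))
    (hT : 0 ≤ T) (hφ : Measurable φ) :
    ∫⁻ z in orderedSimplex (k + 1) T, φ (∑ s : Fin (k + 1), z s * (τ (s + 1) - τ s)) =
      ∫⁻ w, ENNReal.ofReal (simplexSpline τ k T w) * φ w := by
  induction k generalizing T φ with
  | zero =>
    have hτ₀₁ := sub_pos.1 (last_sub_pos_of_strictMonoOn hτ (Finset.self_mem_range_succ 0))
    rw [setLIntegral_orderedSimplex_succ_weightedSum τ 0 T hφ,
      ← setLIntegral_comp_mul_eq_lintegral_simplexSpline_zero hτ₀₁ hT hφ]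
    simp only [setLIntegral_orderedSimplex_zero, Finset.univ_eq_empty, Finset.sum_empty, zero_add]
  | succ k ih =>
    have hτ' := hτ.mono (Set.Iic_subset_Iic.2 (k + 1).le_succ)
    calc _ = ∫⁻ t in Set.Ioo 0 T, ∫⁻ w, ENNReal.ofReal (simplexSpline τ k t w) *
            φ (w + (τ (k + 2) - τ (k + 1)) * t) := by
          rw [setLIntegral_orderedSimplex_succ_weightedSum τ (k + 1) T hφ]
          exact setLIntegral_congr_fun measurableSet_Ioo fun t ht =>
            ih hτ' ht.1.le (hφ.comp (measurable_add_const _))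
      _ = ∫⁻ t in Set.Ioo 0 T, ∫⁻ w,
            ENNReal.ofReal (simplexSpline τ k t (w - (τ (k + 2) - τ (k + 1)) * t)) * φ w := by
          refine lintegral_congr fun t => ?_
          rw [← lintegral_sub_right_eq_self _ ((τ (k + 2) - τ (k + 1)) * t)]
          simp only [sub_add_cancel]
      _ = ∫⁻ w, (∫⁻ t in Set.Ioo 0 T,
            ENNReal.ofReal (simplexSpline τ k t (w - (τ (k + 2) - τ (k + 1)) * t))) * φ w := by
          rw [lintegral_lintegral_swap (by fun_prop)]
          exact lintegral_congr fun w => lintegral_mul_const _ (by fun_prop)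
      _ = _ := by simp only [setLIntegral_simplexSpline hτ hT]

theorem map_weightedSum_orderedSimplex (hτ : StrictMonoOn τ (Set.Iic (k + 1))) (hT : 0 ≤ T) :
    Measure.map (fun z : Fin (k + 1) → ℝ => ∑ s, z s * (τ (s + 1) - τ s))
        (volume.restrict (orderedSimplex (k + 1) T)) =
      volume.withDensity fun w => ENNReal.ofReal (simplexSpline τ k T w) := by
  refine Measure.ext_of_lintegral _ fun φ hφ => ?_
  rw [lintegral_map hφ (by fun_prop), setLIntegral_orderedSimplex_weightedSum hτ hT hφ,
    lintegral_withDensity_eq_lintegral_mul _ (by fun_prop) hφ]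
  rfl

end WeightedSum

lemma map_withDensity_comp {α β : Type*} [MeasurableSpace α] [MeasurableSpace β] (μ : Measure α)
    {g : α → β} (hg : Measurable g) {f : β → ENNReal} (hf : Measurable f) :
    (μ.withDensity (f ∘ g)).map g = (μ.map g).withDensity f := by
  ext s hs
  rw [Measure.map_apply hg hs, withDensity_apply _ (hg hs), withDensity_apply _ hs,
    setLIntegral_map hs hf hg]
  rfl

lemma map_div_volume_withDensity {c : ℝ} (hc : 0 < c) {f : ℝ → ENNReal} (hf : Measurable f) :
    (volume.withDensity f).map (· / c) =
      volume.withDensity fun x => ENNReal.ofReal c * f (c * x) := by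
  have hcomp : f = (fun x => f (c * x)) ∘ (· / c) := by
    funext x
    simp only [Function.comp_apply, mul_div_cancel₀ x hc.ne']
  have hscaled : Measurable fun x => f (c * x) := hf.comp (measurable_const_mul c)
  have hvol : (volume : Measure ℝ).map (· / c) = ENNReal.ofReal c • volume := by
    simpa [div_eq_inv_mul, abs_of_pos hc] using Real.map_volume_mul_left (inv_ne_zero hc.ne')
  conv_lhs => rw [hcomp]
  rw [map_withDensity_comp _ (measurable_div_const c) hscaled, hvol, withDensity_smul_measure,
    ← withDensity_smul _ hscaled]
  rfl

lemma exp_mul_fG (k : ℕ) {θ c : ℝ} (hθ : θ ≠ 0) (hc : 0 < c) (A x : ℝ) :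
    θ ^ (k + 1) * (Real.exp (-(A / θ)) * fG x (A / c) (k + 1 : ℕ) (c / θ)) =
      c * (Real.exp (-(1 / θ) * (c * x)) * (truncPow k (c * x - A) / k.factorial)) := by
  have hmem : A / c < x ↔ 0 < c * x - A := by rw [div_lt_iff₀' hc, sub_pos]
  by_cases hx : A / c < x
  · have hexp : Real.exp (-(1 / θ) * (c * x)) =
        Real.exp (-(A / θ)) * Real.exp (-(c / θ) * (x - A / c)) := by
      rw [← Real.exp_add]
      congr 1
      field_simp
      ring
    have hshift : x - A / c = (c * x - A) / c := by field_simp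
    rw [fG, if_pos hx, truncPow_of_pos k (hmem.1 hx), hexp, hshift, Nat.cast_succ,
      Real.Gamma_nat_eq_factorial, add_sub_cancel_right, ← Nat.cast_succ, Real.rpow_natCast,
      Real.rpow_natCast, div_pow, div_pow]
    field_simp
    rw [Nat.succ_eq_add_one, pow_succ]
    ring
  · rw [fG, if_neg hx, truncPow_of_nonpos k (not_lt.1 (mt hmem.2 hx))]
    ring

lemma scaled_tilted_simplexSpline_eq_sum_fG (γ : ℕ → ℝ) (k : ℕ) {θ c : ℝ} (hθ : θ ≠ 0)
    (hc : 0 < c) (T x : ℝ) :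
    c * (Real.exp (-(1 / θ) * (c * x)) * simplexSpline (fun j => -γ (j + 1)) k T (c * x)) =
      θ ^ (k + 1) * ∑ v ∈ Finset.range (k + 1 + 1),
        (-1 : ℝ) ^ v * Real.exp (-(T / θ) * (γ (k + 1 - v + 1) - γ (k + 1 + 1))) /
            ((∏ j ∈ Finset.Icc 1 v, (γ (k + 1 - v + 1) - γ (k + 1 - v + j + 1))) *
              (∏ j ∈ Finset.Icc 1 (k + 1 - v), (γ j - γ (k + 1 - v + 1)))) *
          fG x (T * (γ (k + 1 - v + 1) - γ (k + 1 + 1)) / c) (k + 1 : ℕ) (c / θ) := by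
  rw [simplexSpline, ← Finset.sum_flip, Finset.sum_div]
  simp only [Finset.mul_sum]
  refine Finset.sum_congr rfl fun v hv => ?_
  obtain ⟨q, hq⟩ := Nat.exists_eq_add_of_le' (Finset.mem_range_succ_iff.1 hv)
  have hweight := nodalWeight_neg_shift γ q v
  rw [← hq] at hweight
  rw [show k + 1 - v = q by omega, hweight]
  have hshift : (-γ (k + 1 + 1) - -γ (q + 1)) * T = T * (γ (q + 1) - γ (k + 1 + 1)) := by ring
  have hexponent : -(T / θ) * (γ (q + 1) - γ (k + 1 + 1)) =
      -(T * (γ (q + 1) - γ (k + 1 + 1)) / θ) := by ring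
  have gamma := exp_mul_fG k hθ hc (T * (γ (q + 1) - γ (k + 1 + 1))) x
  rw [hshift, hexponent]
  linear_combination (-(-1) ^ v / ((∏ j ∈ Finset.Icc 1 v, (γ (q + 1) - γ (q + j + 1))) *
    ∏ j ∈ Finset.Icc 1 q, (γ j - γ (q + 1)))) * gamma

theorem map_div_tilted_weightedSum_orderedSimplex {τ : ℕ → ℝ} {k : ℕ}
    (hτ : StrictMonoOn τ (Set.Iic (k + 1))) {T c : ℝ} (hT : 0 ≤ T) (hc : 0 < c) (r : ℝ) :
    Measure.map (fun z : Fin (k + 1) → ℝ => (∑ s, z s * (τ (s + 1) - τ s)) / c)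
        (volume.withDensity fun z => ENNReal.ofReal ((orderedSimplex (k + 1) T).indicator
          (fun z => Real.exp (r * ∑ s, z s * (τ (s + 1) - τ s))) z)) =
      volume.withDensity fun x =>
        ENNReal.ofReal (c * (Real.exp (r * (c * x)) * simplexSpline τ k T (c * x))) := by
  set L : (Fin (k + 1) → ℝ) → ℝ := fun z => ∑ s, z s * (τ (s + 1) - τ s)
  set tilt : ℝ → ENNReal := fun w => ENNReal.ofReal (Real.exp (r * w))
  have hL : Measurable L := by fun_prop
  have htilt : Measurable tilt := by fun_prop
  have hspline : Measurable fun w => ENNReal.ofReal (simplexSpline τ k T w) := by fun_prop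
  have hsource : (volume.withDensity fun z => ENNReal.ofReal
      ((orderedSimplex (k + 1) T).indicator (fun z => Real.exp (r * L z)) z)) =
      (volume.restrict (orderedSimplex (k + 1) T)).withDensity (tilt ∘ L) := by
    rw [← withDensity_indicator (measurableSet_orderedSimplex _ _)]
    congr with z
    by_cases hz : z ∈ orderedSimplex (k + 1) T <;> simp [hz, tilt]
  calc _ = (((volume.restrict (orderedSimplex (k + 1) T)).withDensity (tilt ∘ L)).map L).map
        (· / c) := by
        rw [Measure.map_map (measurable_div_const c) hL, ← hsource]
        rfl
    _ = (volume.withDensity ((fun w => ENNReal.ofReal (simplexSpline τ k T w)) * tilt)).map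
        (· / c) := by
        rw [map_withDensity_comp _ hL htilt, map_weightedSum_orderedSimplex hτ hT,
          withDensity_mul _ hspline htilt]
    _ = _ := by
        rw [map_div_volume_withDensity hc (hspline.mul htilt)]
        congr with x
        rw [Pi.mul_apply, ← ENNReal.ofReal_mul (simplexSpline_nonneg hτ hT _),
          ← ENNReal.ofReal_mul hc.le, mul_comm (simplexSpline τ k T _)]

theorem conditional_density_mle_case_Zm_general {m : ℕ} (hm : 1 ≤ m) {γ : ℕ → ℝ}
    (hγ : StrictAntiOn γ (Set.Icc 1 (m + 1))) {θ T c : ℝ} (hθ : θ ≠ 0) (hT : 0 ≤ T)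
    (hc : 0 < c) :
    Measure.map
        (fun z : Fin m → ℝ => (∑ h, z h * (γ (h.1 + 1) - γ (h.1 + 2))) / c)
        (volume.withDensity fun z : Fin m → ℝ =>
          ENNReal.ofReal
            (Set.indicator {z : Fin m → ℝ | StrictMono z ∧ ∀ h, 0 < z h ∧ z h < T}
              (fun z => Real.exp (-(1 / θ) * ∑ h, z h * (γ (h.1 + 1) - γ (h.1 + 2)))) z)) =
      volume.withDensity fun x =>
        ENNReal.ofReal
          (θ ^ m * ∑ v ∈ Finset.range (m + 1),
            (-1 : ℝ) ^ v * Real.exp (-(T / θ) * (γ (m - v + 1) - γ (m + 1))) /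
                ((∏ j ∈ Finset.Icc 1 v, (γ (m - v + 1) - γ (m - v + j + 1))) *
                  (∏ j ∈ Finset.Icc 1 (m - v), (γ j - γ (m - v + 1)))) *
              fG x (T * (γ (m - v + 1) - γ (m + 1)) / c) m (c / θ)) := by
  obtain ⟨k, rfl⟩ := Nat.exists_eq_add_of_le' hm
  have hknots : StrictMonoOn (fun j => -γ (j + 1)) (Set.Iic (k + 1)) := fun i hi j hj hij =>
    neg_lt_neg (hγ ⟨i.succ_pos, Nat.succ_le_succ hi⟩ ⟨j.succ_pos, Nat.succ_le_succ hj⟩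
      (Nat.succ_lt_succ hij))
  simpa only [neg_sub_neg, scaled_tilted_simplexSpline_eq_sum_fG γ k hθ hc] using!
    map_div_tilted_weightedSum_orderedSimplex hknots hT hc (-(1 / θ))

lemma gam_sub_gam_succ (n : ℕ) (R : ℕ → ℕ) (v : ℕ) :
    gam n R (v + 1) - gam n R (v + 2) = 1 + R (v + 1) := by
  simp only [gam, Nat.add_sub_cancel, Nat.add_succ_sub_one, Finset.sum_Icc_succ_top v.succ_pos]
  push_cast
  ring

lemma strictAnti_gam (n : ℕ) (R : ℕ → ℕ) : StrictAnti (gam n R) := by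
  refine strictAnti_nat_of_succ_lt fun v => ?_
  cases v with
  | zero => simp [gam]
  | succ v =>
    rw [← sub_pos, gam_sub_gam_succ]
    positivity

/-- Case `Z_{k:m:n} < Z_{m:m:n} < T`: the pushforward of the (sub-probability) measure with
density `1_{0<z₁<⋯<z_m<T} exp(−(1/θ) Σ z_s(1+R_s))` under `g(z) = (Σ z_s(1+R_s))/i` has
Lebesgue density
`x ↦ θ^m Σ_{v=0}^{m} (−1)^v e^{−(T/θ)(γ_{m−v+1}−γ_{m+1})} / [⋯] ·
  f_G(x; T(γ_{m−v+1}−γ_{m+1})/i, m, i/θ)`. -/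
theorem conditional_density_mle_case_Zm (n m : ℕ) (hn : 1 ≤ n) (hm : 1 ≤ m) (R : ℕ → ℕ)
    (hR : (∑ u ∈ Finset.Icc 1 m, R u) + m ≤ n)
    (θ T : ℝ) (hθ : 0 < θ) (hT : 0 < T)
    (i : ℕ) (hi1 : 1 ≤ i) (him : i ≤ m) :
    Measure.map
        (fun z : Fin m → ℝ => (∑ h, z h * (1 + (R (h.1 + 1) : ℝ))) / i)
        (volume.withDensity fun z : Fin m → ℝ =>
          ENNReal.ofReal
            (Set.indicator {z : Fin m → ℝ | StrictMono z ∧ ∀ h, 0 < z h ∧ z h < T}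
              (fun z => Real.exp (-(1 / θ) * ∑ h, z h * (1 + (R (h.1 + 1) : ℝ)))) z)) =
      volume.withDensity fun x =>
        ENNReal.ofReal
          (θ ^ m * ∑ v ∈ Finset.range (m + 1),
            (-1 : ℝ) ^ v *
                Real.exp (-(T / θ) * (gam n R (m - v + 1) - gam n R (m + 1))) /
                ((∏ j ∈ Finset.Icc 1 v, (gam n R (m - v + 1) - gam n R (m - v + j + 1))) *
                  (∏ j ∈ Finset.Icc 1 (m - v), (gam n R j - gam n R (m - v + 1)))) *
              fG x (T * (gam n R (m - v + 1) - gam n R (m + 1)) / i) m (i / θ)) := by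
  have hi : (0 : ℝ) < i := Nat.cast_pos.2 hi1
  simpa only [gam_sub_gam_succ] using conditional_density_mle_case_Zm_general hm
    ((strictAnti_gam n R).strictAntiOn _) hθ.ne' hT.le hi
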